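/- arXiv:2505.14611 — 3 statements merged into one kernel-verified Lean document; each statement's English description precedes it below -/
import Mathlib

section
/- (LDG theorem.) Suppose ρ and ψ are twice continuously differentiable in their parameters with ρ > 0, and let ς ↦ (φ(ς), ϕ(ς)) be a twice differentiable curve. Write r(ς,ν) := ρ(φ(ς),ν) and p(ς,ν) := ψ(ϕ(ς),ν), and let ∇_ξ denote the gradient in the full parameter ξ = (φ,ϕ) ∈ ℝ^N (so ∇_ξ ln ρ has vanishing ϕ-components and ∇_ξ ψ has vanishing φ-components). Then the geodesic system of the Fisher metric holds at ς if and only if the following two equations hold in ℝ^N: Σ_{ν∈B} (2·r²/γ0(ν))·( ∂²(ln r)/∂ς² + (∂(ln r)/∂ς)² − (∂p/∂ς)² )·∇_ξ ln ρ(ν) = 0 and Σ_{ν∈B} (2·r²/γ0(ν))·( ∂²p/∂ς² + 2·(∂(ln r)/∂ς)·(∂p/∂ς) )·∇_ξ ψ(ν) = 0. -/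
noncomputable section

/-- Partial derivative in the `i`-th coordinate direction. -/
def dP {n : ℕ} {E : Type*} [NormedAddCommGroup E] [NormedSpace ℝ E]
    (f : (Fin n → ℝ) → E) (x : Fin n → ℝ) (i : Fin n) : E :=
  fderiv ℝ f x (Pi.single i 1)

variable {P Q : ℕ} {B : Type*} [Fintype B]

/-- ∂ρ/∂φ^u. -/
def Drho (ρ : (Fin P → ℝ) → B → ℝ) (φ : Fin P → ℝ) (ν : B) (u : Fin P) : ℝ :=
  dP (fun φ' => ρ φ' ν) φ u

/-- ∂²ρ/∂φ^u∂φ^v. -/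
def D2rho (ρ : (Fin P → ℝ) → B → ℝ) (φ : Fin P → ℝ) (ν : B) (u v : Fin P) : ℝ :=
  dP (fun φ' => Drho ρ φ' ν v) φ u

/-- ∂ψ/∂ϕ^q. -/
def Dpsi (ψ : (Fin Q → ℝ) → B → ℝ) (ϕ : Fin Q → ℝ) (ν : B) (q : Fin Q) : ℝ :=
  dP (fun ϕ' => ψ ϕ' ν) ϕ q

/-- ∂²ψ/∂ϕ^q∂ϕ^r. -/
def D2psi (ψ : (Fin Q → ℝ) → B → ℝ) (ϕ : Fin Q → ℝ) (ν : B) (q r : Fin Q) : ℝ :=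
  dP (fun ϕ' => Dpsi ψ ϕ' ν r) ϕ q

/-- Magnitude block of the Fisher matrix. -/
def gRho (γ0 : B → ℝ) (ρ : (Fin P → ℝ) → B → ℝ) (φ : Fin P → ℝ) (u v : Fin P) : ℝ :=
  ∑ ν : B, (2 / γ0 ν) * Drho ρ φ ν u * Drho ρ φ ν v

/-- Phase block of the Fisher matrix. -/
def gPsi (γ0 : B → ℝ) (ρ : (Fin P → ℝ) → B → ℝ) (ψ : (Fin Q → ℝ) → B → ℝ)
    (φ : Fin P → ℝ) (ϕ : Fin Q → ℝ) (q r : Fin Q) : ℝ :=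
  ∑ ν : B, (2 / γ0 ν) * (ρ φ ν)^2 * Dpsi ψ ϕ ν q * Dpsi ψ ϕ ν r

/-- Christoffel symbol Γ_{u'v',u}. -/
def Γrr (γ0 : B → ℝ) (ρ : (Fin P → ℝ) → B → ℝ) (φ : Fin P → ℝ) (u' v' u : Fin P) : ℝ :=
  ∑ ν : B, (2 / γ0 ν) * Drho ρ φ ν u * D2rho ρ φ ν u' v'

/-- Christoffel symbol Γ_{q'r',u}. -/
def Γppu (γ0 : B → ℝ) (ρ : (Fin P → ℝ) → B → ℝ) (ψ : (Fin Q → ℝ) → B → ℝ)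
    (φ : Fin P → ℝ) (ϕ : Fin Q → ℝ) (q' r' : Fin Q) (u : Fin P) : ℝ :=
  -∑ ν : B, (2 / γ0 ν) * ρ φ ν * Drho ρ φ ν u * Dpsi ψ ϕ ν q' * Dpsi ψ ϕ ν r'

/-- Christoffel symbol Γ_{q'r',q}. -/
def Γppq (γ0 : B → ℝ) (ρ : (Fin P → ℝ) → B → ℝ) (ψ : (Fin Q → ℝ) → B → ℝ)
    (φ : Fin P → ℝ) (ϕ : Fin Q → ℝ) (q' r' q : Fin Q) : ℝ :=
  ∑ ν : B, (2 / γ0 ν) * (ρ φ ν)^2 * Dpsi ψ ϕ ν q * D2psi ψ ϕ ν q' r'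

/-- Christoffel symbol Γ_{q'u,q} = Γ_{uq',q}. -/
def Γpuq (γ0 : B → ℝ) (ρ : (Fin P → ℝ) → B → ℝ) (ψ : (Fin Q → ℝ) → B → ℝ)
    (φ : Fin P → ℝ) (ϕ : Fin Q → ℝ) (q' : Fin Q) (u : Fin P) (q : Fin Q) : ℝ :=
  ∑ ν : B, (2 / γ0 ν) * ρ φ ν * Drho ρ φ ν u * Dpsi ψ ϕ ν q * Dpsi ψ ϕ ν q'

/-- The geodesic system of the Fisher metric along the curve `ς ↦ (φc ς, ϕc ς)`, at `ς`. -/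
def GeodesicSystem (γ0 : B → ℝ) (ρ : (Fin P → ℝ) → B → ℝ) (ψ : (Fin Q → ℝ) → B → ℝ)
    (φc : ℝ → Fin P → ℝ) (ϕc : ℝ → Fin Q → ℝ) (ς : ℝ) : Prop :=
  (∀ u : Fin P,
    (∑ v, gRho γ0 ρ (φc ς) u v * deriv (deriv (fun t => φc t v)) ς) +
    (∑ u', ∑ v', Γrr γ0 ρ (φc ς) u' v' u *
      deriv (fun t => φc t u') ς * deriv (fun t => φc t v') ς) +
    (∑ q', ∑ r', Γppu γ0 ρ ψ (φc ς) (ϕc ς) q' r' u *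
      deriv (fun t => ϕc t q') ς * deriv (fun t => ϕc t r') ς) = 0) ∧
  (∀ q : Fin Q,
    (∑ r, gPsi γ0 ρ ψ (φc ς) (ϕc ς) q r * deriv (deriv (fun t => ϕc t r)) ς) +
    (∑ q', ∑ r', Γppq γ0 ρ ψ (φc ς) (ϕc ς) q' r' q *
      deriv (fun t => ϕc t q') ς * deriv (fun t => ϕc t r') ς) +
    2 * (∑ q', ∑ u', Γpuq γ0 ρ ψ (φc ς) (ϕc ς) q' u' q *
      deriv (fun t => ϕc t q') ς * deriv (fun t => φc t u') ς) = 0)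

/-- Gradient of `ln ρ(·,ν)` in the full parameter `ξ = (φ,ϕ)`: its ϕ-components vanish. -/
def gradLnRho (ρ : (Fin P → ℝ) → B → ℝ) (φ : Fin P → ℝ) (ν : B) : Fin P ⊕ Fin Q → ℝ :=
  Sum.elim (fun u => dP (fun φ' => Real.log (ρ φ' ν)) φ u) (fun _ => 0)

/-- Gradient of `ψ(·,ν)` in the full parameter `ξ = (φ,ϕ)`: its φ-components vanish. -/
def gradPsi (ψ : (Fin Q → ℝ) → B → ℝ) (ϕ : Fin Q → ℝ) (ν : B) : Fin P ⊕ Fin Q → ℝ :=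
  Sum.elim (fun _ => 0) (fun q => Dpsi ψ ϕ ν q)

/-!
In the flat space `B → ℂ` with weights `2 / γ0`, the curve `r exp (i p)` has acceleration with
radial part `r'' - r p'²` and angular part `r p'' + 2 r' p'`. The chain rule turns the geodesic
system into orthogonality of this acceleration to the coordinate tangent vectors of the model,
which are radial for `φ` and angular for `ϕ`. Substituting `r' = r (ln r)'`,
`r'' = r ((ln r)'' + (ln r)'²)` and `∇ρ = ρ ∇(ln ρ)` gives the logarithmic form.
-/

open Filter Topology

section TwiceDifferentiable

variable {E F G : Type*} [NormedAddCommGroup E] [NormedSpace ℝ E]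
  [NormedAddCommGroup F] [NormedSpace ℝ F] [NormedAddCommGroup G] [NormedSpace ℝ G]

/-- Pointwise twice Fréchet differentiability: `f` is differentiable near `x` and its derivative
is differentiable at `x`. Weaker than `ContDiffAt ℝ 2 f x`, and enough for the second-order chain
rule at `x`. -/
def TwiceDifferentiableAt (f : E → F) (x : E) : Prop :=
  (∀ᶠ y in 𝓝 x, DifferentiableAt ℝ f y) ∧ DifferentiableAt ℝ (fderiv ℝ f) x

namespace TwiceDifferentiableAt

theorem of_contDiffAt {f : E → F} {x : E} (hf : ContDiffAt ℝ 2 f x) :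
    TwiceDifferentiableAt f x :=
  ⟨(hf.eventually (by simp)).mono fun _ hy => hy.differentiableAt two_ne_zero,
    (hf.fderiv_right (m := 1) (by norm_num)).differentiableAt one_ne_zero⟩

theorem of_deriv {c : ℝ → F} {t : ℝ} (hc : ∀ᶠ s in 𝓝 t, DifferentiableAt ℝ c s)
    (hc' : DifferentiableAt ℝ (deriv c) t) : TwiceDifferentiableAt c t := by
  refine ⟨hc, ?_⟩
  have fderiv_eq : fderiv ℝ c = fun s => ContinuousLinearMap.toSpanSingletonCLE (deriv c s) :=
    funext fun s => by ext; simp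
  rw [fderiv_eq]
  fun_prop

theorem differentiableAt {f : E → F} {x : E} (hf : TwiceDifferentiableAt f x) :
    DifferentiableAt ℝ f x :=
  hf.1.self_of_nhds

theorem differentiableAt_deriv {c : ℝ → F} {t : ℝ} (hc : TwiceDifferentiableAt c t) :
    DifferentiableAt ℝ (deriv c) t := by
  have deriv_eq : deriv c = fun s => fderiv ℝ c s 1 :=
    funext fun _ => fderiv_apply_one_eq_deriv.symm
  rw [deriv_eq]
  exact hc.2.clm_apply (differentiableAt_const 1)

theorem comp {g : F → G} {f : E → F} {x : E} (hg : TwiceDifferentiableAt g (f x))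
    (hf : TwiceDifferentiableAt f x) : TwiceDifferentiableAt (fun y => g (f y)) x := by
  have hg_near : ∀ᶠ y in 𝓝 x, DifferentiableAt ℝ g (f y) :=
    hf.differentiableAt.continuousAt.eventually hg.1
  refine ⟨hg_near.mp (hf.1.mono fun y hfy hgy => hgy.comp y hfy), ?_⟩
  have fderiv_eq : fderiv ℝ (fun y => g (f y)) =ᶠ[𝓝 x]
      fun y => (fderiv ℝ g (f y)).comp (fderiv ℝ f y) :=
    hg_near.mp (hf.1.mono fun y hfy hgy => fderiv_comp y hgy hfy)
  exact ((hg.2.comp x hf.differentiableAt).clm_comp hf.2).congr_of_eventuallyEq fderiv_eq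

variable {ι : Type*} [Fintype ι] {c : ℝ → ι → F} {t : ℝ}

theorem apply (hc : TwiceDifferentiableAt c t) (i : ι) :
    TwiceDifferentiableAt (fun s => c s i) t :=
  (of_contDiffAt (contDiff_apply ℝ F i).contDiffAt).comp hc

theorem of_forall_apply (hc : ∀ i, TwiceDifferentiableAt (fun s => c s i) t) :
    TwiceDifferentiableAt c t := by
  have hc_near : ∀ᶠ s in 𝓝 t, ∀ i, DifferentiableAt ℝ (fun s => c s i) s :=
    eventually_all.2 fun i => (hc i).1
  have deriv_eq : deriv c =ᶠ[𝓝 t] fun s i => deriv (fun s => c s i) s :=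
    hc_near.mono fun s hs => deriv_pi hs
  refine of_deriv (hc_near.mono fun s hs => differentiableAt_pi.2 hs) ?_
  exact (differentiableAt_pi.2 fun i => (hc i).differentiableAt_deriv).congr_of_eventuallyEq
    deriv_eq

end TwiceDifferentiableAt

end TwiceDifferentiable

section ChainRule

variable {n : ℕ}

theorem TwiceDifferentiableAt.differentiableAt_dP {F : Type*} [NormedAddCommGroup F]
    [NormedSpace ℝ F] {f : (Fin n → ℝ) → F} {x : Fin n → ℝ} (hf : TwiceDifferentiableAt f x)
    (i : Fin n) : DifferentiableAt ℝ (fun y => dP f y i) x :=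
  hf.2.clm_apply (differentiableAt_const _)

theorem fderiv_apply_eq_sum_dP (f : (Fin n → ℝ) → ℝ) (x v : Fin n → ℝ) :
    fderiv ℝ f x v = ∑ i, dP f x i * v i := by
  conv_lhs => rw [pi_eq_sum_univ' v]
  simp only [map_sum, map_smul, smul_eq_mul, dP, mul_comm]

theorem hasDerivAt_comp_sum_dP {f : (Fin n → ℝ) → ℝ} {c : ℝ → Fin n → ℝ} {t : ℝ}
    (hf : DifferentiableAt ℝ f (c t)) (hc : DifferentiableAt ℝ c t) :
    HasDerivAt (fun s => f (c s)) (∑ i, dP f (c t) i * deriv (fun s => c s i) t) t := by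
  have hc' : HasDerivAt c (fun i => deriv (fun s => c s i) t) t :=
    hasDerivAt_pi.2 fun i => (differentiableAt_pi.1 hc i).hasDerivAt
  rw [← fderiv_apply_eq_sum_dP]
  exact hf.hasFDerivAt.comp_hasDerivAt t hc'

theorem deriv_deriv_comp_eq_sum_dP {f : (Fin n → ℝ) → ℝ} {c : ℝ → Fin n → ℝ} {t : ℝ}
    (hf : TwiceDifferentiableAt f (c t)) (hc : TwiceDifferentiableAt c t) :
    deriv (deriv fun s => f (c s)) t =
      (∑ i, dP f (c t) i * deriv (deriv fun s => c s i) t) +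
        ∑ i, ∑ j, dP (fun x => dP f x j) (c t) i * deriv (fun s => c s i) t *
          deriv (fun s => c s j) t := by
  have deriv_eq : deriv (fun s => f (c s)) =ᶠ[𝓝 t]
      fun s => ∑ j, dP f (c s) j * deriv (fun s => c s j) s := by
    filter_upwards [hc.differentiableAt.continuousAt.eventually hf.1, hc.1] with s hfs hcs
    exact (hasDerivAt_comp_sum_dP hfs hcs).deriv
  have hasDerivAt_sum := HasDerivAt.fun_sum (u := Finset.univ) fun j _ =>
    (hasDerivAt_comp_sum_dP (hf.differentiableAt_dP j) hc.differentiableAt).fun_mul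
      (hc.apply j).differentiableAt_deriv.hasDerivAt
  rw [deriv_eq.deriv_eq, hasDerivAt_sum.deriv, Finset.sum_add_distrib, add_comm]
  congr 1
  simp only [Finset.sum_mul]
  exact Finset.sum_comm

end ChainRule

section Logarithm

theorem deriv_eq_mul_deriv_log {r : ℝ → ℝ} {t : ℝ} (hr : DifferentiableAt ℝ r t) (h0 : r t ≠ 0) :
    deriv r t = r t * deriv (fun s => Real.log (r s)) t := by
  rw [deriv.log hr h0, mul_div_cancel₀ _ h0]

theorem deriv_deriv_eq_mul_deriv_deriv_log {r : ℝ → ℝ} {t : ℝ} (hr : TwiceDifferentiableAt r t)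
    (h0 : r t ≠ 0) :
    deriv (deriv r) t = r t * (deriv (deriv fun s => Real.log (r s)) t +
      deriv (fun s => Real.log (r s)) t ^ 2) := by
  have deriv_log_eq : deriv (fun s => Real.log (r s)) =ᶠ[𝓝 t] fun s => deriv r s / r s := by
    filter_upwards [hr.1, hr.differentiableAt.continuousAt.eventually_ne h0] with s hs hs0
    exact deriv.log hs hs0
  rw [deriv_log_eq.deriv_eq, deriv_log_eq.self_of_nhds,
    deriv_fun_div hr.differentiableAt_deriv hr.differentiableAt h0]
  field_simp
  ring

theorem dP_eq_mul_dP_log {n : ℕ} {f : (Fin n → ℝ) → ℝ} {x : Fin n → ℝ}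
    (hf : DifferentiableAt ℝ f x) (h0 : f x ≠ 0) (i : Fin n) :
    dP f x i = f x * dP (fun y => Real.log (f y)) x i := by
  simp only [dP, fderiv.log hf h0, smul_apply, smul_eq_mul, mul_inv_cancel_left₀ h0]

end Logarithm

section Contraction

variable {α β ι R : Type*} [Fintype α] [Fintype β] [Fintype ι] [CommSemiring R]

theorem sum_weighted_sum_mul (w : ι → R) (F : ι → α → R) (x : α → R) :
    ∑ a, (∑ k, w k * F k a) * x a = ∑ k, w k * ∑ a, F k a * x a := by
  simp only [Finset.sum_mul, Finset.mul_sum, mul_assoc]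
  exact Finset.sum_comm

theorem sum_sum_weighted_sum_mul_mul (w : ι → R) (F : ι → α → β → R) (x : α → R) (y : β → R) :
    ∑ a, ∑ b, (∑ k, w k * F k a b) * x a * y b =
      ∑ k, w k * ∑ a, ∑ b, F k a b * x a * y b := by
  simp only [Finset.sum_mul, Finset.mul_sum, mul_assoc]
  rw [Finset.sum_comm (s := (Finset.univ : Finset ι))]
  exact Finset.sum_congr rfl fun a _ => Finset.sum_comm

end Contraction

section Geodesic

variable {γ0 : B → ℝ} {ρ : (Fin P → ℝ) → B → ℝ} {ψ : (Fin Q → ℝ) → B → ℝ}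
  {φc : ℝ → Fin P → ℝ} {ϕc : ℝ → Fin Q → ℝ} {ς : ℝ}

theorem sum_gRho_add_sum_Γrr (hρ : ∀ ν, TwiceDifferentiableAt (fun φ => ρ φ ν) (φc ς))
    (hφc : TwiceDifferentiableAt φc ς) (u : Fin P) :
    (∑ v, gRho γ0 ρ (φc ς) u v * deriv (deriv fun t => φc t v) ς) +
      (∑ u', ∑ v', Γrr γ0 ρ (φc ς) u' v' u *
        deriv (fun t => φc t u') ς * deriv (fun t => φc t v') ς) =
      ∑ ν, 2 / γ0 ν * Drho ρ (φc ς) ν u * deriv (deriv fun t => ρ (φc t) ν) ς := by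
  simp only [gRho, Γrr, sum_weighted_sum_mul, sum_sum_weighted_sum_mul_mul,
    ← Finset.sum_add_distrib, ← mul_add, deriv_deriv_comp_eq_sum_dP (hρ _) hφc]
  rfl

theorem sum_gPsi_add_sum_Γppq (hψ : ∀ ν, TwiceDifferentiableAt (fun ϕ => ψ ϕ ν) (ϕc ς))
    (hϕc : TwiceDifferentiableAt ϕc ς) (φ : Fin P → ℝ) (q : Fin Q) :
    (∑ r, gPsi γ0 ρ ψ φ (ϕc ς) q r * deriv (deriv fun t => ϕc t r) ς) +
      (∑ q', ∑ r', Γppq γ0 ρ ψ φ (ϕc ς) q' r' q *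
        deriv (fun t => ϕc t q') ς * deriv (fun t => ϕc t r') ς) =
      ∑ ν, 2 / γ0 ν * ρ φ ν ^ 2 * Dpsi ψ (ϕc ς) ν q *
        deriv (deriv fun t => ψ (ϕc t) ν) ς := by
  simp only [gPsi, Γppq, sum_weighted_sum_mul, sum_sum_weighted_sum_mul_mul,
    ← Finset.sum_add_distrib, ← mul_add, deriv_deriv_comp_eq_sum_dP (hψ _) hϕc]
  rfl

theorem sum_Γppu (hψ : ∀ ν, DifferentiableAt ℝ (fun ϕ => ψ ϕ ν) (ϕc ς))
    (hϕc : DifferentiableAt ℝ ϕc ς) (φ : Fin P → ℝ) (u : Fin P) :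
    ∑ q', ∑ r', Γppu γ0 ρ ψ φ (ϕc ς) q' r' u *
        deriv (fun t => ϕc t q') ς * deriv (fun t => ϕc t r') ς =
      -∑ ν, 2 / γ0 ν * ρ φ ν * Drho ρ φ ν u * deriv (fun t => ψ (ϕc t) ν) ς ^ 2 := by
  have Γppu_eq (q' r' : Fin Q) : Γppu γ0 ρ ψ φ (ϕc ς) q' r' u =
      -∑ ν, 2 / γ0 ν * ρ φ ν * Drho ρ φ ν u *
        (Dpsi ψ (ϕc ς) ν q' * Dpsi ψ (ϕc ς) ν r') := by
    simp only [Γppu, mul_assoc]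
  simp only [Γppu_eq, neg_mul, Finset.sum_neg_distrib, sum_sum_weighted_sum_mul_mul,
    (hasDerivAt_comp_sum_dP (hψ _) hϕc).deriv, sq, Finset.sum_mul_sum]
  simp only [Dpsi, mul_assoc, mul_left_comm]

theorem sum_Γpuq (hρ : ∀ ν, DifferentiableAt ℝ (fun φ => ρ φ ν) (φc ς))
    (hφc : DifferentiableAt ℝ φc ς) (hψ : ∀ ν, DifferentiableAt ℝ (fun ϕ => ψ ϕ ν) (ϕc ς))
    (hϕc : DifferentiableAt ℝ ϕc ς) (q : Fin Q) :
    ∑ q', ∑ u', Γpuq γ0 ρ ψ (φc ς) (ϕc ς) q' u' q *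
        deriv (fun t => ϕc t q') ς * deriv (fun t => φc t u') ς =
      ∑ ν, 2 / γ0 ν * ρ (φc ς) ν * Dpsi ψ (ϕc ς) ν q *
        (deriv (fun t => ψ (ϕc t) ν) ς * deriv (fun t => ρ (φc t) ν) ς) := by
  have Γpuq_eq (q' : Fin Q) (u' : Fin P) : Γpuq γ0 ρ ψ (φc ς) (ϕc ς) q' u' q =
      ∑ ν, 2 / γ0 ν * ρ (φc ς) ν * Dpsi ψ (ϕc ς) ν q *
        (Dpsi ψ (ϕc ς) ν q' * Drho ρ (φc ς) ν u') :=
    Finset.sum_congr rfl fun ν _ => by ring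
  simp only [Γpuq_eq, sum_sum_weighted_sum_mul_mul, (hasDerivAt_comp_sum_dP (hψ _) hϕc).deriv,
    (hasDerivAt_comp_sum_dP (hρ _) hφc).deriv, Finset.sum_mul_sum]
  simp only [Dpsi, Drho, mul_assoc, mul_left_comm]

theorem geodesicSystem_iff_acceleration
    (hρ : ∀ ν, TwiceDifferentiableAt (fun φ => ρ φ ν) (φc ς))
    (hψ : ∀ ν, TwiceDifferentiableAt (fun ϕ => ψ ϕ ν) (ϕc ς))
    (hφc : TwiceDifferentiableAt φc ς) (hϕc : TwiceDifferentiableAt ϕc ς) :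
    GeodesicSystem γ0 ρ ψ φc ϕc ς ↔
      (∀ u, ∑ ν, 2 / γ0 ν * Drho ρ (φc ς) ν u *
        (deriv (deriv fun t => ρ (φc t) ν) ς -
          ρ (φc ς) ν * deriv (fun t => ψ (ϕc t) ν) ς ^ 2) = 0) ∧
      (∀ q, ∑ ν, 2 / γ0 ν * (ρ (φc ς) ν * Dpsi ψ (ϕc ς) ν q) *
        (ρ (φc ς) ν * deriv (deriv fun t => ψ (ϕc t) ν) ς +
          2 * deriv (fun t => ρ (φc t) ν) ς * deriv (fun t => ψ (ϕc t) ν) ς) = 0) := by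
  have hρ₁ := fun ν => (hρ ν).differentiableAt
  have hψ₁ := fun ν => (hψ ν).differentiableAt
  simp only [GeodesicSystem, sum_gRho_add_sum_Γrr hρ hφc, sum_Γppu hψ₁ hϕc.differentiableAt,
    sum_gPsi_add_sum_Γppq hψ hϕc, sum_Γpuq hρ₁ hφc.differentiableAt hψ₁ hϕc.differentiableAt,
    ← sub_eq_add_neg, Finset.mul_sum, ← Finset.sum_sub_distrib, ← Finset.sum_add_distrib]
  refine and_congr (forall_congr' fun u => ?_) (forall_congr' fun q => ?_) <;>
    refine Eq.congr_left (Finset.sum_congr rfl fun ν _ => ?_) <;> ring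

theorem sum_smul_gradLnRho_eq_zero_iff (a : B → ℝ) (φ : Fin P → ℝ) :
    ∑ ν, a ν • gradLnRho (Q := Q) ρ φ ν = 0 ↔
      ∀ u, ∑ ν, a ν * dP (fun φ' => Real.log (ρ φ' ν)) φ u = 0 := by
  simp [funext_iff, gradLnRho]

theorem sum_smul_gradPsi_eq_zero_iff (a : B → ℝ) (ϕ : Fin Q → ℝ) :
    ∑ ν, a ν • gradPsi (P := P) ψ ϕ ν = 0 ↔ ∀ q, ∑ ν, a ν * Dpsi ψ ϕ ν q = 0 := by
  simp [funext_iff, gradPsi]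

end Geodesic

theorem stmt5_general {P Q : ℕ} {B : Type*} [Fintype B]
    (γ0 : B → ℝ) (hγ0 : ∀ ν, γ0 ν ≠ 0)
    (ρ : (Fin P → ℝ) → B → ℝ) (ψ : (Fin Q → ℝ) → B → ℝ)
    (φc : ℝ → Fin P → ℝ) (ϕc : ℝ → Fin Q → ℝ) (ς : ℝ)
    (hρpos : ∀ ν, 0 < ρ (φc ς) ν)
    (hρ : ∀ ν, TwiceDifferentiableAt (fun φ => ρ φ ν) (φc ς))
    (hψ : ∀ ν, TwiceDifferentiableAt (fun ϕ => ψ ϕ ν) (ϕc ς))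
    (hφc : TwiceDifferentiableAt φc ς) (hϕc : TwiceDifferentiableAt ϕc ς) :
    GeodesicSystem γ0 ρ ψ φc ϕc ς ↔
      ((∑ ν : B, ((2 * (ρ (φc ς) ν)^2 / γ0 ν) *
          (deriv (deriv (fun t => Real.log (ρ (φc t) ν))) ς +
            (deriv (fun t => Real.log (ρ (φc t) ν)) ς)^2 -
            (deriv (fun t => ψ (ϕc t) ν) ς)^2)) •
          gradLnRho (Q := Q) ρ (φc ς) ν = (0 : Fin P ⊕ Fin Q → ℝ)) ∧
       (∑ ν : B, ((2 * (ρ (φc ς) ν)^2 / γ0 ν) *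
          (deriv (deriv (fun t => ψ (ϕc t) ν)) ς +
            2 * deriv (fun t => Real.log (ρ (φc t) ν)) ς *
              deriv (fun t => ψ (ϕc t) ν) ς)) •
          gradPsi (P := P) ψ (ϕc ς) ν = (0 : Fin P ⊕ Fin Q → ℝ))) := by
  have hr := fun ν => (hρ ν).comp hφc
  rw [geodesicSystem_iff_acceleration hρ hψ hφc hϕc, sum_smul_gradLnRho_eq_zero_iff,
    sum_smul_gradPsi_eq_zero_iff]
  refine and_congr (forall_congr' fun u => Eq.congr_left (Finset.sum_congr rfl fun ν _ => ?_))
    (forall_congr' fun q => Eq.congr_left (Finset.sum_congr rfl fun ν _ => ?_))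
  · rw [Drho, dP_eq_mul_dP_log (hρ ν).differentiableAt (hρpos ν).ne',
      deriv_deriv_eq_mul_deriv_deriv_log (hr ν) (hρpos ν).ne']
    field_simp [hγ0 ν]
  · rw [deriv_eq_mul_deriv_log (hr ν).differentiableAt (hρpos ν).ne']
    field_simp [hγ0 ν]

/-- LDG theorem: the geodesic system of the Fisher metric holds iff the two vector equations
in ℝ^N combining log-magnitude and phase, with their full-parameter gradients, hold. -/
theorem stmt5 {P Q : ℕ} {B : Type*} [Fintype B] [Nonempty B]
    (γ0 : B → ℝ) (hγ0 : ∀ ν, 0 < γ0 ν)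
    (ρ : (Fin P → ℝ) → B → ℝ) (ψ : (Fin Q → ℝ) → B → ℝ)
    (hρpos : ∀ φ ν, 0 < ρ φ ν)
    (hρ : ∀ ν, ContDiff ℝ 2 (fun φ => ρ φ ν))
    (hψ : ∀ ν, ContDiff ℝ 2 (fun ϕ => ψ ϕ ν))
    (φc : ℝ → Fin P → ℝ) (ϕc : ℝ → Fin Q → ℝ)
    (hφc : ∀ v, Differentiable ℝ (fun ς => φc ς v))
    (hφc' : ∀ v, Differentiable ℝ (deriv (fun ς => φc ς v)))
    (hϕc : ∀ q, Differentiable ℝ (fun ς => ϕc ς q))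
    (hϕc' : ∀ q, Differentiable ℝ (deriv (fun ς => ϕc ς q)))
    (ς : ℝ) :
    GeodesicSystem γ0 ρ ψ φc ϕc ς ↔
      ((∑ ν : B, ((2 * (ρ (φc ς) ν)^2 / γ0 ν) *
          (deriv (deriv (fun t => Real.log (ρ (φc t) ν))) ς +
            (deriv (fun t => Real.log (ρ (φc t) ν)) ς)^2 -
            (deriv (fun t => ψ (ϕc t) ν) ς)^2)) •
          gradLnRho (Q := Q) ρ (φc ς) ν = (0 : Fin P ⊕ Fin Q → ℝ)) ∧
       (∑ ν : B, ((2 * (ρ (φc ς) ν)^2 / γ0 ν) *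
          (deriv (deriv (fun t => ψ (ϕc t) ν)) ς +
            2 * deriv (fun t => Real.log (ρ (φc t) ν)) ς *
              deriv (fun t => ψ (ϕc t) ν) ς)) •
          gradPsi (P := P) ψ (ϕc ς) ν = (0 : Fin P ⊕ Fin Q → ℝ))) := by
  exact stmt5_general γ0 (fun ν => (hγ0 ν).ne') ρ ψ φc ϕc ς (hρpos _)
    (fun ν => .of_contDiffAt (hρ ν).contDiffAt) (fun ν => .of_contDiffAt (hψ ν).contDiffAt)
    (.of_forall_apply fun v => .of_deriv (.of_forall (hφc v)) (hφc' v ς))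
    (.of_forall_apply fun q => .of_deriv (.of_forall (hϕc q)) (hϕc' q ς))
end
end

section
/- With k1, k2, K and α̃ as defined from α1, α2 and δ, the quantity (α̃'(ς))² + K/α̃(ς)² equals k1 for every ς ∈ ℝ; consequently the geodesic length integral evaluates in closed form: ∫₀¹ √( (α̃'(ς))² + K/α̃(ς)² ) dς = √k1. -/
/-- `k1 = α1² + α2² − 2·α1·α2·cos δ`. -/
noncomputable def k1c (α1 α2 δ : ℝ) : ℝ := α1^2 + α2^2 - 2*α1*α2*Real.cos δ

/-- `k2 = (−α1² + α1·α2·cos δ)/k1`. -/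
noncomputable def k2c (α1 α2 δ : ℝ) : ℝ := (-α1^2 + α1*α2*Real.cos δ) / k1c α1 α2 δ

/-- `K = α1²·α2²·(sin δ)²`. -/
noncomputable def Kc (α1 α2 δ : ℝ) : ℝ := α1^2 * α2^2 * (Real.sin δ)^2

/-- `α̃(ς) = √( k1·(ς + k2)² + K/k1 )`. -/
noncomputable def alphaT (α1 α2 δ ς : ℝ) : ℝ :=
  Real.sqrt (k1c α1 α2 δ * (ς + k2c α1 α2 δ)^2 + Kc α1 α2 δ / k1c α1 α2 δ)

/-!
`α̃ ς` is the distance from the origin to a point travelling at constant speed `√k1` along the chord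
joining the points with polar radii `α1`, `α2` at angle `δ`, and `√K` is its constant angular
momentum, so `α̃'² + K / α̃²` is the squared speed in polar coordinates. Analytically, if
`f² = a (x + c)² + b` then `f' = a (x + c) / f`, hence
`f'² + a b / f² = a (a (x + c)² + b) / f² = a`.
-/

section SqrtQuadratic

variable {a b c x : ℝ}

lemma hasDerivAt_sqrt_mul_sq_add (hx : a * (x + c) ^ 2 + b ≠ 0) :
    HasDerivAt (fun y ↦ √(a * (y + c) ^ 2 + b)) (a * (x + c) / √(a * (x + c) ^ 2 + b)) x := by
  have hquad : HasDerivAt (fun y ↦ a * (y + c) ^ 2 + b) (2 * (a * (x + c))) x := by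
    refine (((((hasDerivAt_id' x).add_const c).fun_pow 2).const_mul a).add_const b).congr_deriv ?_
    push_cast
    ring
  exact (hquad.sqrt hx).congr_deriv (mul_div_mul_left _ _ two_ne_zero)

lemma sq_deriv_sqrt_mul_sq_add_add_div (hx : 0 < a * (x + c) ^ 2 + b) :
    deriv (fun y ↦ √(a * (y + c) ^ 2 + b)) x ^ 2 + a * b / √(a * (x + c) ^ 2 + b) ^ 2 = a := by
  rw [(hasDerivAt_sqrt_mul_sq_add hx.ne').deriv, div_pow, Real.sq_sqrt hx.le, ← add_div,
    div_eq_iff hx.ne']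
  ring

end SqrtQuadratic

section Chord

variable {α1 α2 δ : ℝ}

lemma k1c_eq_sq_add_sq (α1 α2 δ : ℝ) :
    k1c α1 α2 δ = (α1 - α2 * Real.cos δ) ^ 2 + (α2 * Real.sin δ) ^ 2 := by
  unfold k1c
  linear_combination -α2 ^ 2 * Real.sin_sq_add_cos_sq δ

lemma k1c_pos (h2 : α2 ≠ 0) (hδ : Real.sin δ ≠ 0) : 0 < k1c α1 α2 δ := by
  rw [k1c_eq_sq_add_sq]
  positivity

lemma Kc_pos (h1 : α1 ≠ 0) (h2 : α2 ≠ 0) (hδ : Real.sin δ ≠ 0) : 0 < Kc α1 α2 δ := by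
  unfold Kc
  positivity

lemma sq_deriv_alphaT_add_div_sq_alphaT (h1 : α1 ≠ 0) (h2 : α2 ≠ 0) (hδ : Real.sin δ ≠ 0) (ς : ℝ) :
    deriv (alphaT α1 α2 δ) ς ^ 2 + Kc α1 α2 δ / alphaT α1 α2 δ ς ^ 2 = k1c α1 α2 δ := by
  have hk : 0 < k1c α1 α2 δ := k1c_pos h2 hδ
  have hK : 0 < Kc α1 α2 δ := Kc_pos h1 h2 hδ
  have hradicand : 0 < k1c α1 α2 δ * (ς + k2c α1 α2 δ) ^ 2 + Kc α1 α2 δ / k1c α1 α2 δ := by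
    positivity
  have hspeed := sq_deriv_sqrt_mul_sq_add_add_div hradicand
  rwa [mul_div_cancel₀ _ hk.ne'] at hspeed

end Chord

/-- `(α̃')² + K/α̃²` is constantly `k1`, so the geodesic length integral is `√k1`. -/
theorem stmt14 (α1 α2 δ : ℝ) (h1 : 0 < α1) (h2 : 0 < α2)
    (hδ : δ ∈ Set.Ioo 0 Real.pi) :
    (∀ ς : ℝ, (deriv (alphaT α1 α2 δ) ς)^2 + Kc α1 α2 δ / (alphaT α1 α2 δ ς)^2
        = k1c α1 α2 δ) ∧
    (∫ ς in (0:ℝ)..1,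
        Real.sqrt ((deriv (alphaT α1 α2 δ) ς)^2 + Kc α1 α2 δ / (alphaT α1 α2 δ ς)^2))
      = Real.sqrt (k1c α1 α2 δ) := by
  have hspeed :=
    sq_deriv_alphaT_add_div_sq_alphaT h1.ne' h2.ne' (Real.sin_pos_of_mem_Ioo hδ).ne'
  refine ⟨hspeed, ?_⟩
  simp only [hspeed, intervalIntegral.integral_const, sub_zero, one_smul]
end

section
/- Let w : B → ℝ with w(ν) > 0, ω0 := Σ_{ν∈B} w(ν), and let Δψ : B → ℝ satisfy |Δψ(ν)| ≤ π for all ν ∈ B. If there exist ν, ν' ∈ B with Δψ(ν)² ≠ Δψ(ν')², then the inequality is strict: (1/ω0)·Σ_{ν∈B} w(ν)·cos(Δψ(ν)) > cos( √( (1/ω0)·Σ_{ν∈B} w(ν)·Δψ(ν)² ) ). Consequently for every γ > 0 the Fisher–Rao distance on the submanifold strictly exceeds that on the full manifold, d_{L2,B,α} > d_{L2,B}, so the submanifold L2(B,α) is not a fully geodesic submanifold of L2(B). -/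
/-!
The derivative of `x ↦ cos √x` at `x > 0` is `-sinc √x / 2`, and `sinc` decreases strictly on
`[0, π]` because it is the slope of the secant from the origin of the strictly concave function
`sin`. Hence `x ↦ cos √x` is strictly convex on `[0, π²]`, and the strict Jensen inequality at the
points `(Δψ ν)²` gives the comparison of cosines. Both distances are the third side of a triangle
with sides `γ` and `1`, which by the law of cosines decreases strictly in the cosine of the
enclosed angle.
-/

section

open Real Set

lemma strictAntiOn_sinc : StrictAntiOn sinc (Icc 0 π) := by
  intro x hx y hy hxy
  have hy_pos : 0 < y := hx.1.trans_lt hxy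
  rcases hx.1.eq_or_lt with rfl | hx_pos
  · rw [sinc_zero, sinc_of_ne_zero hy_pos.ne', div_lt_one hy_pos]
    exact sin_lt hy_pos
  · have secant_lt : (sin y - sin 0) / (y - 0) < (sin x - sin 0) / (x - 0) :=
      strictConcaveOn_sin_Icc.secant_strict_mono (left_mem_Icc.2 pi_pos.le) hx hy
        hx_pos.ne' hy_pos.ne' hxy
    simpa only [sin_zero, sub_zero, ← sinc_of_ne_zero hx_pos.ne', ← sinc_of_ne_zero hy_pos.ne']
      using secant_lt

lemma hasDerivAt_cos_sqrt {x : ℝ} (hx : 0 < x) :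
    HasDerivAt (fun x ↦ cos √x) (-sinc √x / 2) x := by
  have hsqrt : √x ≠ 0 := (sqrt_pos.2 hx).ne'
  convert (hasDerivAt_sqrt hx.ne').cos using 1
  rw [sinc_of_ne_zero hsqrt]
  field_simp

lemma strictConvexOn_cos_sqrt : StrictConvexOn ℝ (Icc 0 (π ^ 2)) fun x ↦ cos √x := by
  refine StrictMonoOn.strictConvexOn_of_deriv (convex_Icc _ _) (by fun_prop) ?_
  rw [interior_Icc]
  have sqrt_mem : ∀ x ∈ Ioo 0 (π ^ 2), √x ∈ Icc 0 π := fun x hx ↦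
    ⟨sqrt_nonneg x, sqrt_le_iff.2 ⟨pi_pos.le, hx.2.le⟩⟩
  intro x hx y hy hxy
  have sinc_lt : sinc √y < sinc √x :=
    strictAntiOn_sinc (sqrt_mem x hx) (sqrt_mem y hy) (sqrt_lt_sqrt hx.1.le hxy)
  rw [(hasDerivAt_cos_sqrt hx.1).deriv, (hasDerivAt_cos_sqrt hy.1).deriv]
  linarith

variable {ι : Type*} {t : Finset ι} {w θ : ι → ℝ}

lemma cos_sqrt_sum_mul_sq_lt_sum_mul_cos
    (hw : ∀ i ∈ t, 0 < w i) (hw_sum : ∑ i ∈ t, w i = 1) (hθ : ∀ i ∈ t, |θ i| ≤ π)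
    (hne : ∃ i ∈ t, ∃ j ∈ t, θ i ^ 2 ≠ θ j ^ 2) :
    cos √(∑ i ∈ t, w i * θ i ^ 2) < ∑ i ∈ t, w i * cos (θ i) := by
  have sq_mem : ∀ i ∈ t, θ i ^ 2 ∈ Icc 0 (π ^ 2) := fun i hi ↦
    ⟨sq_nonneg _, sq_le_sq' (abs_le.1 (hθ i hi)).1 (abs_le.1 (hθ i hi)).2⟩
  simpa only [smul_eq_mul, sqrt_sq_eq_abs, cos_abs] using
    strictConvexOn_cos_sqrt.map_sum_lt hw hw_sum sq_mem hne

lemma sum_mul_cos_le_one (hw : ∀ i ∈ t, 0 ≤ w i) (hw_sum : ∑ i ∈ t, w i = 1) :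
    ∑ i ∈ t, w i * cos (θ i) ≤ 1 :=
  (convex_Iic (𝕜 := ℝ) (1 : ℝ)).sum_mem hw hw_sum fun i _ ↦ cos_le_one (θ i)

lemma strictAntiOn_sqrt_law_cos {a b : ℝ} (ha : 0 < a) (hb : 0 < b) :
    StrictAntiOn (fun c ↦ √(a ^ 2 + b ^ 2 - 2 * a * b * c)) (Iic 1) := by
  intro c _ d hd hcd
  have hab : 0 < 2 * a * b := by positivity
  have radicand_nonneg : 0 ≤ a ^ 2 + b ^ 2 - 2 * a * b * d :=
    calc 0 ≤ (a - b) ^ 2 + 2 * a * b * (1 - d) :=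
          add_nonneg (sq_nonneg _) (mul_nonneg hab.le (sub_nonneg.2 hd))
      _ = a ^ 2 + b ^ 2 - 2 * a * b * d := by ring
  exact sqrt_lt_sqrt radicand_nonneg (sub_lt_sub_left (mul_lt_mul_of_pos_left hcd hab) _)

end

/-- Strict version: if the squared phase differences are not all equal, the Jensen-type
inequality is strict, so the Fisher–Rao distance on the submanifold `L2(B,α)` strictly
exceeds that on `L2(B)` — the submanifold is not fully geodesic. -/
theorem stmt19 {B : Type*} [Fintype B] [Nonempty B]
    (w : B → ℝ) (hw : ∀ ν, 0 < w ν)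
    (ω0 : ℝ) (hω0 : ω0 = ∑ ν : B, w ν)
    (Δψ : B → ℝ) (hΔψ : ∀ ν, |Δψ ν| ≤ Real.pi)
    (hne : ∃ ν ν' : B, (Δψ ν)^2 ≠ (Δψ ν')^2) :
    ((1 / ω0) * ∑ ν : B, w ν * Real.cos (Δψ ν)
        > Real.cos (Real.sqrt ((1 / ω0) * ∑ ν : B, w ν * (Δψ ν)^2))) ∧
    (∀ γ : ℝ, 0 < γ →
      Real.sqrt (γ^2 + 1 - 2 * γ * ((1 / ω0) * ∑ ν : B, w ν * Real.cos (Δψ ν)))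
        < Real.sqrt (γ^2 + 1 -
            2 * γ * Real.cos (Real.sqrt ((1 / ω0) * ∑ ν : B, w ν * (Δψ ν)^2)))) := by
  have hω0_pos : 0 < ω0 := hω0 ▸ Finset.sum_pos (fun ν _ ↦ hw ν) Finset.univ_nonempty
  have weight_pos : ∀ ν ∈ Finset.univ, 0 < 1 / ω0 * w ν := fun ν _ ↦
    mul_pos (one_div_pos.2 hω0_pos) (hw ν)
  have weight_sum : ∑ ν, 1 / ω0 * w ν = 1 := by
    rw [← Finset.mul_sum, ← hω0, one_div_mul_cancel hω0_pos.ne']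
  simp only [Finset.mul_sum Finset.univ _ (1 / ω0), ← mul_assoc (1 / ω0)]
  have cos_lt := cos_sqrt_sum_mul_sq_lt_sum_mul_cos weight_pos weight_sum (fun ν _ ↦ hΔψ ν)
    (by simpa only [Finset.mem_univ, true_and] using hne)
  have mean_le_one := sum_mul_cos_le_one (θ := Δψ) (fun ν hν ↦ (weight_pos ν hν).le) weight_sum
  refine ⟨cos_lt, fun γ hγ ↦ ?_⟩
  simpa only [one_pow, mul_one] using
    strictAntiOn_sqrt_law_cos hγ one_pos (cos_lt.le.trans mean_le_one) mean_le_one cos_lt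
end
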